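/- Let T be an o-minimal theory in which all principal types are interdefinable, let p be a decreasing n-type over a parameter set A, let c̄ = ⟨c₁,…,c_n⟩ ⊨ p, and let k be an index such that tp(c_k / A c̄_{<k}) is principal. Then for every i with k ≤ i ≤ n, tp(c_i / A c̄_{<k}) is principal. -/

import Mathlib

/-!
Write `B = A ∪ {c_j : j < k}`. The point is that `tp(c/B)` is principal if and only if `dcl(Bc)`
contains an infinitesimal: an element `d > z` with `(z, d)` disjoint from `dcl(B)`.

If `tp(c/B)` is principal, interdefinability carries `c` to the principal type above `z`
(`exists_infinitesimal`). Interdefinability also shows that `dcl(B)` has no least element above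
`z` (`dense_above`), as such an element would be sent to a point of `dcl(B)` above all of `dcl(B)`.

Conversely (`principal_of_infinitesimal`) let `d = f(c)` with `f` a `B`-definable function. By
density `c ∉ dcl(B)`. If `tp(c/B)` were not principal, every `B`-definable set containing `c` would
contain an interval `[b, g]` around `c` with `b, g ∈ dcl(B)` (`exists_Icc`). Apply this to the set of
points near which `f` comes arbitrarily close to `z`, or to its complement. In the first case
`f > z` comes close to `z` everywhere on `[b, g]`, which o-minimality forbids
(`not_close_everywhere`); in the second, `f` has a greatest lower bound above `z` on `[b, g]`
(`exists_uniform`), and this bound lies in `dcl(B)` and is at most `d`, against the choice of `d`.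

Finally, `c_i ≾ c_k` over `B` gives an infinitesimal in `dcl(B c_i)`: either directly, from
`c_i ≺ c_k`, or below the one that the principal element `c_k` defines.
-/

open FirstOrder FirstOrder.Language Set Topology Filter

namespace OMinPaper

/-- An `n`-ary function is `A`-definable if its graph is an `A`-definable set. -/
def DefFun (L : FirstOrder.Language) {M : Type*} [L.Structure M] (A : Set M) {n : ℕ}
    (f : (Fin n → M) → M) : Prop :=
  A.Definable L {p : Fin (n + 1) → M | f (Fin.init p) = p (Fin.last n)}

/-- A unary function is `A`-definable if its graph is an `A`-definable set. -/
def DefFun₁ (L : FirstOrder.Language) {M : Type*} [L.Structure M] (A : Set M)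
    (f : M → M) : Prop :=
  A.Definable L {p : Fin 2 → M | f (p 0) = p 1}

/-- An `n`-ary partial function with domain `Ω` is `A`-definable if its graph
(restricted to `Ω`) is an `A`-definable set. -/
def DefFunOn (L : FirstOrder.Language) {M : Type*} [L.Structure M] (A : Set M) {n : ℕ}
    (Ω : Set (Fin n → M)) (f : (Fin n → M) → M) : Prop :=
  A.Definable L {p : Fin (n + 1) → M | Fin.init p ∈ Ω ∧ f (Fin.init p) = p (Fin.last n)}

/-- A subset of a linear order is a point or an open interval (with endpoints
possibly `±∞`). -/
def IsIntervalOrPoint {M : Type*} [LinearOrder M] (s : Set M) : Prop :=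
  (∃ a, s = {a}) ∨ (∃ a b, s = Set.Ioo a b) ∨ (∃ a, s = Set.Iio a) ∨
    (∃ a, s = Set.Ioi a) ∨ s = Set.univ

/-- `M` is an o-minimal structure: the order is definable without parameters, it is a dense
linear order without endpoints, and every subset of `M` definable with parameters is a finite
union of points and open intervals. -/
def IsOMinimal (L : FirstOrder.Language) (M : Type*) [L.Structure M] [LinearOrder M] : Prop :=
  (∅ : Set M).Definable L {p : Fin 2 → M | p 0 < p 1} ∧
  DenselyOrdered M ∧ NoMinOrder M ∧ NoMaxOrder M ∧
  ∀ s : Set M, (Set.univ : Set M).Definable₁ L s →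
    ∃ t : Finset (Set M), (∀ u ∈ t, IsIntervalOrPoint u) ∧ s = ⋃₀ ↑t

/-- The definable closure of a parameter set `A`: elements whose singleton is `A`-definable. -/
def dcl (L : FirstOrder.Language) {M : Type*} [L.Structure M] (A : Set M) : Set M :=
  {b | A.Definable₁ L {b}}

/-- `c` is principal above `β` over `A`: `β ∈ dcl(A)`, `β < c`, and no point of `dcl(A)` lies
in the interval `(β, c)`. -/
def PrincipalAbove (L : FirstOrder.Language) {M : Type*} [L.Structure M] [LinearOrder M]
    (A : Set M) (c β : M) : Prop :=
  β ∈ dcl L A ∧ β < c ∧ ∀ d ∈ dcl L A, d ∉ Set.Ioo β c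

/-- `c` is principal below `β` over `A`. -/
def PrincipalBelow (L : FirstOrder.Language) {M : Type*} [L.Structure M] [LinearOrder M]
    (A : Set M) (c β : M) : Prop :=
  β ∈ dcl L A ∧ c < β ∧ ∀ d ∈ dcl L A, d ∉ Set.Ioo c β

/-- `c` realizes the principal type near `+∞` over `A`. -/
def NearPosInf (L : FirstOrder.Language) {M : Type*} [L.Structure M] [LinearOrder M]
    (A : Set M) (c : M) : Prop :=
  ∀ d ∈ dcl L A, d < c

/-- `c` realizes the principal type near `-∞` over `A`. -/
def NearNegInf (L : FirstOrder.Language) {M : Type*} [L.Structure M] [LinearOrder M]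
    (A : Set M) (c : M) : Prop :=
  ∀ d ∈ dcl L A, c < d

/-- `tp(c/A)` is principal. -/
def Principal (L : FirstOrder.Language) {M : Type*} [L.Structure M] [LinearOrder M]
    (A : Set M) (c : M) : Prop :=
  c ∉ dcl L A ∧ ((∃ β, PrincipalAbove L A c β) ∨ (∃ β, PrincipalBelow L A c β) ∨
    NearPosInf L A c ∨ NearNegInf L A c)

/-- Two (sets of realizations of) 1-types `P` and `Q` are interdefinable over `B`: there are
`B`-definable unary functions mapping every realization of one to a realization of the other. -/
def Interdef (L : FirstOrder.Language) {M : Type*} [L.Structure M] (B : Set M)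
    (P Q : Set M) : Prop :=
  (∃ f : M → M, DefFun₁ L B f ∧ ∀ x ∈ P, f x ∈ Q) ∧
  (∃ g : M → M, DefFun₁ L B g ∧ ∀ y ∈ Q, g y ∈ P)

/-- All principal types are interdefinable over `A`. -/
def AllPrincipalInterdefOver (L : FirstOrder.Language) {M : Type*} [L.Structure M]
    [LinearOrder M] (A : Set M) : Prop :=
  (∀ b : M, Interdef L (A ∪ {b}) {x | PrincipalAbove L (A ∪ {b}) x b}
      {x | NearPosInf L (A ∪ {b}) x}) ∧
  (∀ b c : M, Interdef L (A ∪ {b, c}) {x | PrincipalAbove L (A ∪ {b, c}) x b}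
      {x | PrincipalBelow L (A ∪ {b, c}) x c}) ∧
  Interdef L A {x | NearPosInf L A x} {x | NearNegInf L A x}

/-- All principal types are interdefinable in the theory of `M`. -/
def AllPrincipalInterdef (L : FirstOrder.Language) (M : Type*) [L.Structure M]
    [LinearOrder M] : Prop :=
  ∀ A : Set M, AllPrincipalInterdefOver L A

/-- `X` is cofinal at `a` in `N`: `X ∩ N` is cofinal in `{x ∈ N : x < a}`. -/
def CofinalAt {M : Type*} [LinearOrder M] (X N : Set M) (a : M) : Prop :=
  ∀ y ∈ N, y < a → ∃ x ∈ X ∩ N, x < a ∧ y ≤ x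

/-- `X` is coinitial at `a` in `N`: `X ∩ N` is coinitial in `{x ∈ N : x > a}`. -/
def CoinitialAt {M : Type*} [LinearOrder M] (X N : Set M) (a : M) : Prop :=
  ∀ y ∈ N, a < y → ∃ x ∈ X ∩ N, a < x ∧ x ≤ y

/-- `tp(a/B)` is in scale on `A`: some `B`-definable unary function maps `dcl(A)` to a set both
cofinal and coinitial at `a` in `dcl(B)`. -/
def InScale (L : FirstOrder.Language) {M : Type*} [L.Structure M] [LinearOrder M]
    (A B : Set M) (a : M) : Prop :=
  ∃ f : M → M, DefFun₁ L B f ∧ CofinalAt (f '' dcl L A) (dcl L B) a ∧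
    CoinitialAt (f '' dcl L A) (dcl L B) a

/-- `tp(a/B)` is near scale on `A`. -/
def NearScale (L : FirstOrder.Language) {M : Type*} [L.Structure M] [LinearOrder M]
    (A B : Set M) (a : M) : Prop :=
  ¬ InScale L A B a ∧ ∃ f : M → M, DefFun₁ L B f ∧
    (CofinalAt (f '' dcl L A) (dcl L B) a ∨ CoinitialAt (f '' dcl L A) (dcl L B) a)

/-- `tp(a/B)` is out of scale on `A`: no `B`-definable unary image of `dcl(A)` is cofinal or
coinitial at `a` in `dcl(B)`. -/
def OutOfScale (L : FirstOrder.Language) {M : Type*} [L.Structure M] [LinearOrder M]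
    (A B : Set M) (a : M) : Prop :=
  ∀ f : M → M, DefFun₁ L B f →
    ¬ CofinalAt (f '' dcl L A) (dcl L B) a ∧ ¬ CoinitialAt (f '' dcl L A) (dcl L B) a

/-- `a ≺_A b` (relative to the distinguished `∅`-definable element `z`). -/
def Prec (L : FirstOrder.Language) {M : Type*} [L.Structure M] [LinearOrder M]
    (z : M) (A : Set M) (a b : M) : Prop :=
  ∃ a' ∈ dcl L (A ∪ {a}), z < a' ∧ ∀ d ∈ dcl L (A ∪ {b}), d ∉ Set.Ioo z a'

/-- `a ∼_A b`. -/
def Sim (L : FirstOrder.Language) {M : Type*} [L.Structure M] [LinearOrder M]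
    (z : M) (A : Set M) (a b : M) : Prop :=
  ¬ Prec L z A a b ∧ ¬ Prec L z A b a

/-- `a ≾_A b`. -/
def PrecSim (L : FirstOrder.Language) {M : Type*} [L.Structure M] [LinearOrder M]
    (z : M) (A : Set M) (a b : M) : Prop :=
  Prec L z A a b ∨ Sim L z A a b

/-- The set of coordinates of `c̄` before index `i`, as a parameter set. -/
def below {M : Type*} {n : ℕ} (c : Fin n → M) (i : Fin n) : Set M :=
  c '' {k | k < i}

/-- The tuple `c̄` realizes a decreasing type over `A`: `c_i ≿_i c_j` for `i < j`. -/
def Decreasing (L : FirstOrder.Language) {M : Type*} [L.Structure M] [LinearOrder M]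
    (z : M) (A : Set M) {n : ℕ} (c : Fin n → M) : Prop :=
  ∀ i j : Fin n, i < j → PrecSim L z (A ∪ below c i) (c j) (c i)

/-- A curve `γ̄` (defined for `t` with `z < t < u`) is non-oscillatory: each definable function
`f` of `(t, γ̄(t))` either is eventually equal to, or eventually different from, any fixed value
`z₀`, as `t → z⁺`. -/
def NonOscillatory (L : FirstOrder.Language) {M : Type*} [L.Structure M] [LinearOrder M]
    (z : M) {n : ℕ} (γ : M → Fin n → M) : Prop :=
  ∀ f : (Fin (n + 1) → M) → M, DefFun L (Set.univ : Set M) f → ∀ z₀ : M,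
    ∃ s, z < s ∧ ((∀ t ∈ Set.Ioo z s, f (Fin.cons t (γ t)) = z₀) ∨
      (∀ t ∈ Set.Ioo z s, f (Fin.cons t (γ t)) ≠ z₀))

end OMinPaper

open OMinPaper

namespace OMinPaper

/-! ### Definable predicates and definable terms -/

section Definability

variable {L : FirstOrder.Language} {M : Type*} [L.Structure M] {B : Set M}

/-- The predicate `P` on assignments of the variables `α` is `B`-definable. -/
def DP (L : FirstOrder.Language) {M : Type*} [L.Structure M] (B : Set M) {α : Type}
    (P : (α → M) → Prop) : Prop :=
  B.Definable L {v | P v}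

/-- The term `t` in the variables `α` is `B`-definable: its graph is. The value variable is
`none`, the others are `some i`. -/
def DT (L : FirstOrder.Language) {M : Type*} [L.Structure M] (B : Set M) {α : Type}
    (t : (α → M) → M) : Prop :=
  DP L B (fun w : Option α → M => w none = t (fun i => w (some i)))

variable {α β : Type}

theorem DP.mono {B' : Set M} {P : (α → M) → Prop} (h : DP L B P) (hB : B ⊆ B') : DP L B' P :=
  Set.Definable.mono h hB

theorem DP.and {P Q : (α → M) → Prop} (hP : DP L B P) (hQ : DP L B Q) :
    DP L B (fun v => P v ∧ Q v) :=
  Set.Definable.inter hP hQ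

theorem DP.or {P Q : (α → M) → Prop} (hP : DP L B P) (hQ : DP L B Q) :
    DP L B (fun v => P v ∨ Q v) :=
  Set.Definable.union hP hQ

theorem DP.not {P : (α → M) → Prop} (hP : DP L B P) : DP L B (fun v => ¬ P v) :=
  Set.Definable.compl hP

theorem DP.congr {P Q : (α → M) → Prop} (hP : DP L B P) (h : ∀ v, P v ↔ Q v) : DP L B Q := by
  have : P = Q := funext fun v => propext (h v)
  exact this ▸ hP

theorem DP.imp {P Q : (α → M) → Prop} (hP : DP L B P) (hQ : DP L B Q) :
    DP L B (fun v => P v → Q v) :=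
  (hP.not.or hQ).congr fun _ => by tauto

theorem DP.iff {P Q : (α → M) → Prop} (hP : DP L B P) (hQ : DP L B Q) :
    DP L B (fun v => (P v ↔ Q v)) :=
  ((hP.imp hQ).and (hQ.imp hP)).congr fun _ => by tauto

theorem DP.reindex {P : (α → M) → Prop} (g : α → β) (hP : DP L B P) :
    DP L B (fun w : β → M => P (fun i => w (g i))) :=
  Set.Definable.preimage_comp g hP

theorem DP.ex {P : (α → M) → M → Prop}
    (h : DP L B (fun w : Option α → M => P (fun i => w (some i)) (w none))) :
    DP L B (fun v => ∃ x, P v x) := by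
  obtain ⟨φ, hφ⟩ := h
  let g : Option α → α ⊕ Unit := fun o => o.elim (Sum.inr ()) Sum.inl
  refine ⟨(FirstOrder.Language.Formula.relabel g φ).iExs Unit, ?_⟩
  ext v
  have key : ∀ x : M, P v x ↔ φ.Realize (fun o : Option α => o.elim x v) := fun x => by
    have := Set.ext_iff.1 hφ (fun o : Option α => o.elim x v)
    exact this
  simp only [Set.mem_ofPred_eq, FirstOrder.Language.Formula.realize_iExs,
    FirstOrder.Language.Formula.realize_relabel, key]
  have e : ∀ i : Unit → M, (Sum.elim v i ∘ g) = fun o : Option α => o.elim (i ()) v := by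
    intro i; funext o; cases o <;> rfl
  constructor
  · rintro ⟨x, hx⟩
    exact ⟨fun _ => x, by rw [e]; exact hx⟩
  · rintro ⟨i, hi⟩
    exact ⟨i (), by rw [e] at hi; exact hi⟩

theorem DP.all {P : (α → M) → M → Prop}
    (h : DP L B (fun w : Option α → M => P (fun i => w (some i)) (w none))) :
    DP L B (fun v => ∀ x, P v x) :=
  (DP.not (DP.ex (P := fun v x => ¬ P v x) h.not)).congr fun v => by simp

theorem DP.subst {P : (α → M) → M → Prop} {t : (α → M) → M} (ht : DT L B t)
    (h : DP L B (fun w : Option α → M => P (fun i => w (some i)) (w none))) :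
    DP L B (fun v => P v (t v)) :=
  (DP.ex (P := fun v x => x = t v ∧ P v x) (ht.and h)).congr fun v => by simp

theorem DT.reindex {t : (α → M) → M} (g : α → β) (h : DT L B t) :
    DT L B (fun w : β → M => t (fun i => w (g i))) :=
  (DP.reindex (Option.map g) h).congr fun _ => Iff.rfl

theorem DP.eq_var (i j : α) : DP L B (fun v : α → M => v i = v j) :=
  ⟨(FirstOrder.Language.Term.var i).equal (FirstOrder.Language.Term.var j), by
    ext v; simp [FirstOrder.Language.Formula.realize_equal]⟩

theorem DT.var (i : α) : DT L B (fun v : α → M => v i) := DP.eq_var none (some i)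

theorem DT.const {b : M} (hb : b ∈ dcl L B) : DT L B (fun _ : α → M => b) :=
  DP.reindex (P := fun v : Fin 1 → M => v 0 = b) (fun _ => none) hb

theorem DT.app {f : M → M} (hf : DefFun₁ L B f) {t : (α → M) → M} (ht : DT L B t) :
    DT L B (fun v => f (t v)) := by
  have h0 : DP L B (fun p : Fin 2 → M => f (p 0) = p 1) := hf
  refine DP.subst (P := fun (w : Option α → M) x => w none = f x)
    (t := fun w => t (fun i => w (some i))) (ht.reindex some) ?_
  exact (h0.reindex (![none, some none] : Fin 2 → Option (Option α))).congr fun _ => eq_comm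

theorem DP.eq {s t : (α → M) → M} (hs : DT L B s) (ht : DT L B t) :
    DP L B (fun v => s v = t v) :=
  DP.subst (P := fun v x => x = t v) hs ht

theorem DP.lt [LinearOrder M] (hlt : (∅ : Set M).Definable L {p : Fin 2 → M | p 0 < p 1})
    {s t : (α → M) → M} (hs : DT L B s) (ht : DT L B t) :
    DP L B (fun v => s v < t v) := by
  have h0 : DP L B (fun p : Fin 2 → M => p 0 < p 1) := hlt.mono (Set.empty_subset _)
  refine DP.subst (P := fun v x => x < t v) hs ?_
  refine DP.subst (P := fun (w : Option α → M) y => w none < y) (ht.reindex some) ?_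
  exact h0.reindex (![some none, none] : Fin 2 → Option (Option α))

theorem DP.le [LinearOrder M] (hlt : (∅ : Set M).Definable L {p : Fin 2 → M | p 0 < p 1})
    {s t : (α → M) → M} (hs : DT L B s) (ht : DT L B t) :
    DP L B (fun v => s v ≤ t v) :=
  (DP.lt hlt ht hs).not.congr fun _ => not_lt

theorem DP.mem {S : Set M} (hS : B.Definable₁ L S) {t : (α → M) → M} (ht : DT L B t) :
    DP L B (fun v => t v ∈ S) :=
  DP.subst (P := fun _ x => x ∈ S) ht
    (DP.reindex (P := fun v : Fin 1 → M => v 0 ∈ S) (fun _ => none) hS)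

theorem subset_dcl : B ⊆ dcl L B := fun _ hb => Set.Definable.singleton_of_mem L hb

theorem dcl_mono {B' : Set M} (h : B ⊆ B') : dcl L B ⊆ dcl L B' :=
  fun _ hb => Set.Definable.mono hb h

theorem mem_dcl_univ (b : M) : b ∈ dcl L (Set.univ : Set M) := subset_dcl (Set.mem_univ b)

/-- A definable function maps the definable closure to itself. -/
theorem DefFun₁.mem_dcl {f : M → M} (hf : DefFun₁ L B f) {b : M} (hb : b ∈ dcl L B) :
    f b ∈ dcl L B :=
  DP.eq (DT.var (0 : Fin 1)) (DT.app hf (DT.const hb))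

theorem DefFun₁.mono {B' : Set M} {f : M → M} (hf : DefFun₁ L B f) (h : B ⊆ B') :
    DefFun₁ L B' f :=
  Set.Definable.mono hf h

/-- A set definable over `B ∪ {b}` is the fibre over `b` of a `B`-definable set. -/
theorem exists_fibre {b : M} {s : Set (α → M)} (h : (B ∪ {b}).Definable L s) :
    ∃ R : (Option α → M) → Prop, DP L B R ∧ ∀ v, v ∈ s ↔ R (fun o => o.elim b v) := by
  classical
  obtain ⟨φ, rfl⟩ := Set.definable_iff_exists_formula_sum.1 h
  let g : ↑(B ∪ {b}) ⊕ α → B ⊕ Option α := fun x =>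
    x.elim (fun a : ↑(B ∪ {b}) => if h : (a : M) ∈ B then Sum.inl ⟨a, h⟩ else Sum.inr none)
      (fun i => Sum.inr (some i))
  refine ⟨fun w => (FirstOrder.Language.Formula.relabel g φ).Realize (Sum.elim (↑) w),
    Set.definable_iff_exists_formula_sum.2 ⟨_, rfl⟩, fun v => ?_⟩
  beta_reduce
  rw [FirstOrder.Language.Formula.realize_relabel]
  have : (Sum.elim (fun a : B => (a : M)) (fun o : Option α => o.elim b v)) ∘ g =
      Sum.elim (fun a : ↑(B ∪ {b}) => (a : M)) v := by
    funext x
    rcases x with ⟨a, ha⟩ | i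
    · by_cases hB : a ∈ B
      · simp [g, hB]
      · have hab : a = b := by simpa [hB] using ha
        subst hab
        simp [g, hB]
    · rfl
  rw [this]
  rfl

/-- Parameters in the definable closure can be eliminated. -/
theorem definable_of_union {b : M} (hb : b ∈ dcl L B) {s : Set (α → M)}
    (h : (B ∪ {b}).Definable L s) : B.Definable L s := by
  obtain ⟨R, hR, hs⟩ := exists_fibre h
  have h1 : DP L B (fun v : α → M => R (fun o => o.elim b v)) := by
    refine DP.subst (P := fun v x => R (fun o => o.elim x v)) (DT.const hb) ?_
    refine hR.congr fun w => ?_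
    have : w = fun o : Option α => o.elim (w none) (fun i => w (some i)) := by
      funext o; cases o <;> rfl
    exact iff_of_eq (congrArg R this)
  exact h1.congr fun v => (hs v).symm

theorem dcl_union {b : M} (hb : b ∈ dcl L B) : dcl L (B ∪ {b}) = dcl L B :=
  Set.Subset.antisymm (fun _ h => definable_of_union hb h) (dcl_mono Set.subset_union_left)

theorem DefFun₁.of_union {b : M} (hb : b ∈ dcl L B) {f : M → M} (h : DefFun₁ L (B ∪ {b}) f) :
    DefFun₁ L B f :=
  definable_of_union hb h

/-- Every element of `dcl (B ∪ {c})` is the value at `c` of a `B`-definable function. -/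
theorem exists_defFun {c d z : M} (hz : z ∈ dcl L B) (hd : d ∈ dcl L (B ∪ {c})) :
    ∃ f : M → M, DefFun₁ L B f ∧ f c = d := by
  classical
  obtain ⟨R, hR, hs⟩ := exists_fibre hd
  let Q : M → M → Prop := fun x y => R (fun o => o.elim x (fun _ => y))
  have hQ : ∀ {γ : Type} (i j : γ), DP L B (fun v : γ → M => Q (v i) (v j)) := by
    intro γ i j
    refine (hR.reindex (fun o => o.elim i (fun _ => j))).congr fun v => ?_
    refine iff_of_eq (congrArg R ?_)
    funext o; cases o <;> rfl
  -- off the set where the fibre is a singleton, the function takes the dummy value `z`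
  let f : M → M := fun x => if h : ∃ y, ∀ y', Q x y' ↔ y' = y then h.choose else z
  have graph : ∀ x y, f x = y ↔ (∀ y', Q x y' ↔ y' = y) ∨
      ((¬ ∃ y, ∀ y', Q x y' ↔ y' = y) ∧ y = z) := by
    intro x y
    by_cases h : ∃ y, ∀ y', Q x y' ↔ y' = y
    · have hf : f x = h.choose := dif_pos h
      rw [hf]
      constructor
      · rintro rfl
        exact Or.inl h.choose_spec
      · rintro (h' | h')
        · exact (h' _).1 ((h.choose_spec _).2 rfl)
        · exact absurd h h'.1
    · have hf : f x = z := dif_neg h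
      rw [hf]
      constructor
      · rintro rfl
        exact Or.inr ⟨h, rfl⟩
      · rintro (h' | h')
        · exact absurd ⟨y, h'⟩ h
        · exact h'.2.symm
  refine ⟨f, ?_, ?_⟩
  · have : DP L B (fun p : Fin 2 → M => f (p 0) = p 1) := by
      refine DP.congr ?_ (fun p => (graph (p 0) (p 1)).symm)
      refine DP.or (DP.all (DP.iff (hQ _ _) (DP.eq (DT.var _) (DT.var _)))) (DP.and (DP.not
        (DP.ex (DP.all (DP.iff (hQ _ _) (DP.eq (DT.var _) (DT.var _)))))) ?_)
      exact DP.eq (DT.var _) (DT.const hz)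
    exact this
  · refine (graph c d).2 (Or.inl fun y' => ?_)
    exact (hs (fun _ => y')).symm

theorem Definable₁.to_univ {S : Set M} (hS : B.Definable₁ L S) :
    (Set.univ : Set M).Definable₁ L S :=
  Set.Definable.mono hS (Set.subset_univ _)

end Definability

/-! ### Consequences of o-minimality -/

section OMinimal

variable {L : FirstOrder.Language} {M : Type*} [L.Structure M] [LinearOrder M] {B : Set M}

/-- A property of subsets of `M` that holds for `∅`, points and open intervals and passes to
binary unions holds for all definable sets. -/
theorem IsOMinimal.induction (hmin : IsOMinimal L M) {p : Set M → Prop} (h0 : p ∅)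
    (h1 : ∀ s, IsIntervalOrPoint s → p s) (hu : ∀ s t, p s → p t → p (s ∪ t))
    {S : Set M} (hS : (Set.univ : Set M).Definable₁ L S) : p S := by
  classical
  obtain ⟨t, ht, rfl⟩ := hmin.2.2.2.2 S hS
  clear hS
  induction t using Finset.induction_on with
  | empty => simpa using h0
  | insert a s _ ih =>
    rw [Finset.coe_insert, Set.sUnion_insert]
    exact hu _ _ (h1 _ (ht _ (Finset.mem_insert_self _ _)))
      (ih fun u hu => ht _ (Finset.mem_insert_of_mem hu))

theorem IsOMinimal.exists_isGLB (hmin : IsOMinimal L M) {S : Set M}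
    (hS : (Set.univ : Set M).Definable₁ L S) (hne : S.Nonempty) (hb : BddBelow S) :
    ∃ a, IsGLB S a := by
  obtain ⟨_, _, _, _, _⟩ := id hmin
  revert hne hb
  refine hmin.induction (p := fun S => S.Nonempty → BddBelow S → ∃ a, IsGLB S a) ?_ ?_ ?_ hS
  · rintro ⟨x, hx⟩; exact absurd hx (Set.notMem_empty x)
  · rintro s (⟨a, rfl⟩ | ⟨a, b, rfl⟩ | ⟨a, rfl⟩ | ⟨a, rfl⟩ | rfl) hne hb
    · exact ⟨a, isGLB_singleton⟩
    · exact ⟨a, isGLB_Ioo (Set.nonempty_Ioo.1 hne)⟩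
    · exact absurd hb (not_bddBelow_Iio a)
    · exact ⟨a, isGLB_Ioi⟩
    · exact absurd hb not_bddBelow_univ
  · intro s t hs ht _ hb
    have hbs : BddBelow s := hb.mono Set.subset_union_left
    have hbt : BddBelow t := hb.mono Set.subset_union_right
    rcases s.eq_empty_or_nonempty with rfl | hns
    · simpa using ht (by simpa using ‹(∅ ∪ t).Nonempty›) hbt
    rcases t.eq_empty_or_nonempty with rfl | hnt
    · simpa using hs hns hbs
    obtain ⟨a, ha⟩ := hs hns hbs
    obtain ⟨b, hb⟩ := ht hnt hbt
    exact ⟨a ⊓ b, ha.union hb⟩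

theorem IsOMinimal.exists_isLUB (hmin : IsOMinimal L M) {S : Set M}
    (hS : (Set.univ : Set M).Definable₁ L S) (hne : S.Nonempty) (hb : BddAbove S) :
    ∃ a, IsLUB S a := by
  obtain ⟨_, _, _, _, _⟩ := id hmin
  revert hne hb
  refine hmin.induction (p := fun S => S.Nonempty → BddAbove S → ∃ a, IsLUB S a) ?_ ?_ ?_ hS
  · rintro ⟨x, hx⟩; exact absurd hx (Set.notMem_empty x)
  · rintro s (⟨a, rfl⟩ | ⟨a, b, rfl⟩ | ⟨a, rfl⟩ | ⟨a, rfl⟩ | rfl) hne hb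
    · exact ⟨a, isLUB_singleton⟩
    · exact ⟨b, isLUB_Ioo (Set.nonempty_Ioo.1 hne)⟩
    · exact ⟨a, isLUB_Iio⟩
    · exact absurd hb (not_bddAbove_Ioi a)
    · exact absurd hb not_bddAbove_univ
  · intro s t hs ht _ hb
    have hbs : BddAbove s := hb.mono Set.subset_union_left
    have hbt : BddAbove t := hb.mono Set.subset_union_right
    rcases s.eq_empty_or_nonempty with rfl | hns
    · simpa using ht (by simpa using ‹(∅ ∪ t).Nonempty›) hbt
    rcases t.eq_empty_or_nonempty with rfl | hnt
    · simpa using hs hns hbs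
    obtain ⟨a, ha⟩ := hs hns hbs
    obtain ⟨b, hb⟩ := ht hnt hbt
    exact ⟨a ⊔ b, ha.union hb⟩

theorem IsOMinimal.exists_Ioo (hmin : IsOMinimal L M) {S : Set M}
    (hS : (Set.univ : Set M).Definable₁ L S) (hinf : S.Infinite) :
    ∃ a b, a < b ∧ Set.Ioo a b ⊆ S := by
  obtain ⟨_, _, _, _, _⟩ := id hmin
  revert hinf
  refine hmin.induction (p := fun S => S.Infinite → ∃ a b, a < b ∧ Set.Ioo a b ⊆ S) ?_ ?_ ?_ hS
  · intro h; exact absurd Set.finite_empty h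
  · rintro s (⟨a, rfl⟩ | ⟨a, b, rfl⟩ | ⟨a, rfl⟩ | ⟨a, rfl⟩ | rfl) hinf
    · exact absurd (Set.finite_singleton a) hinf
    · obtain ⟨x, hx⟩ := hinf.nonempty
      exact ⟨a, b, hx.1.trans hx.2, subset_rfl⟩
    · obtain ⟨x, hx⟩ := exists_lt a
      exact ⟨x, a, hx, fun y hy => hy.2⟩
    · obtain ⟨x, hx⟩ := exists_gt a
      exact ⟨a, x, hx, fun y hy => hy.1⟩
    · obtain ⟨y, _⟩ := hinf.nonempty
      obtain ⟨x, hx⟩ := exists_gt y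
      exact ⟨y, x, hx, Set.subset_univ _⟩
  · intro s t hs ht hinf
    rcases Set.infinite_union.1 hinf with h | h
    · obtain ⟨a, b, hab, hsub⟩ := hs h
      exact ⟨a, b, hab, hsub.trans Set.subset_union_left⟩
    · obtain ⟨a, b, hab, hsub⟩ := ht h
      exact ⟨a, b, hab, hsub.trans Set.subset_union_right⟩

/-- The frontier of `S`, in order terms: every open interval around the point meets both `S`
and its complement. -/
def Fr (S : Set M) : Set M :=
  {x | ∀ u v, u < x → x < v → (∃ y ∈ S, u < y ∧ y < v) ∧ ∃ y, y ∉ S ∧ u < y ∧ y < v}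

theorem IsOMinimal.finite_Fr (hmin : IsOMinimal L M) {S : Set M}
    (hS : (Set.univ : Set M).Definable₁ L S) : (Fr S).Finite := by
  obtain ⟨_, _, _, _, _⟩ := id hmin
  -- off a finite set, `S` is locally everything or locally empty
  have key : ∃ E : Set M, E.Finite ∧ ∀ x ∉ E, ∃ p q, p < x ∧ x < q ∧
      (Set.Ioo p q ⊆ S ∨ ∀ y ∈ Set.Ioo p q, y ∉ S) := by
    refine hmin.induction (p := fun S => ∃ E : Set M, E.Finite ∧ ∀ x ∉ E, ∃ p q, p < x ∧ x < q ∧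
      (Set.Ioo p q ⊆ S ∨ ∀ y ∈ Set.Ioo p q, y ∉ S)) ?_ ?_ ?_ hS
    · refine ⟨∅, Set.finite_empty, fun x _ => ?_⟩
      obtain ⟨p, hp⟩ := exists_lt x
      obtain ⟨q, hq⟩ := exists_gt x
      exact ⟨p, q, hp, hq, Or.inr fun y _ => Set.notMem_empty y⟩
    · rintro s (⟨a, rfl⟩ | ⟨a, b, rfl⟩ | ⟨a, rfl⟩ | ⟨a, rfl⟩ | rfl)
      · refine ⟨{a}, Set.finite_singleton a, fun x hx => ?_⟩
        obtain ⟨p, hp⟩ := exists_lt x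
        obtain ⟨q, hq⟩ := exists_gt x
        rcases lt_or_gt_of_ne hx with h | h
        · exact ⟨p, a, hp, h, Or.inr fun y hy => hy.2.ne⟩
        · exact ⟨a, q, h, hq, Or.inr fun y hy => hy.1.ne'⟩
      · refine ⟨{a, b}, Set.toFinite _, fun x hx => ?_⟩
        simp only [Set.mem_insert_iff, Set.mem_singleton_iff, not_or] at hx
        obtain ⟨p, hp⟩ := exists_lt x
        obtain ⟨q, hq⟩ := exists_gt x
        rcases lt_or_gt_of_ne hx.1 with h | h
        · exact ⟨p, a, hp, h, Or.inr fun y hy h' => lt_asymm hy.2 h'.1⟩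
        rcases lt_or_gt_of_ne hx.2 with h' | h'
        · exact ⟨a, b, h, h', Or.inl subset_rfl⟩
        · exact ⟨b, q, h', hq, Or.inr fun y hy h' => lt_asymm hy.1 h'.2⟩
      · refine ⟨{a}, Set.finite_singleton a, fun x hx => ?_⟩
        obtain ⟨p, hp⟩ := exists_lt x
        obtain ⟨q, hq⟩ := exists_gt x
        rcases lt_or_gt_of_ne hx with h | h
        · exact ⟨p, a, hp, h, Or.inl fun y hy => hy.2⟩
        · exact ⟨a, q, h, hq, Or.inr fun y hy h' => lt_asymm hy.1 h'⟩
      · refine ⟨{a}, Set.finite_singleton a, fun x hx => ?_⟩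
        obtain ⟨p, hp⟩ := exists_lt x
        obtain ⟨q, hq⟩ := exists_gt x
        rcases lt_or_gt_of_ne hx with h | h
        · exact ⟨p, a, hp, h, Or.inr fun y hy h' => lt_asymm hy.2 h'⟩
        · exact ⟨a, q, h, hq, Or.inl fun y hy => hy.1⟩
      · refine ⟨∅, Set.finite_empty, fun x _ => ?_⟩
        obtain ⟨p, hp⟩ := exists_lt x
        obtain ⟨q, hq⟩ := exists_gt x
        exact ⟨p, q, hp, hq, Or.inl (Set.subset_univ _)⟩
    · rintro s t ⟨E, hE, h⟩ ⟨E', hE', h'⟩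
      refine ⟨E ∪ E', hE.union hE', fun x hx => ?_⟩
      obtain ⟨p, q, hp, hq, h1⟩ := h x fun hx' => hx (Or.inl hx')
      obtain ⟨p', q', hp', hq', h2⟩ := h' x fun hx' => hx (Or.inr hx')
      refine ⟨p ⊔ p', q ⊓ q', sup_lt_iff.2 ⟨hp, hp'⟩, lt_inf_iff.2 ⟨hq, hq'⟩, ?_⟩
      have m1 : ∀ y ∈ Set.Ioo (p ⊔ p') (q ⊓ q'), y ∈ Set.Ioo p q := fun y hy =>
        ⟨(sup_lt_iff.1 hy.1).1, (lt_inf_iff.1 hy.2).1⟩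
      have m2 : ∀ y ∈ Set.Ioo (p ⊔ p') (q ⊓ q'), y ∈ Set.Ioo p' q' := fun y hy =>
        ⟨(sup_lt_iff.1 hy.1).2, (lt_inf_iff.1 hy.2).2⟩
      rcases h1 with h1 | h1
      · exact Or.inl fun y hy => Or.inl (h1 (m1 y hy))
      rcases h2 with h2 | h2
      · exact Or.inl fun y hy => Or.inr (h2 (m2 y hy))
      · exact Or.inr fun y hy hy' => hy'.elim (h1 y (m1 y hy)) (h2 y (m2 y hy))
  obtain ⟨E, hE, h⟩ := key
  refine hE.subset fun x hx => ?_
  by_contra hxE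
  obtain ⟨p, q, hp, hq, h1⟩ := h x hxE
  obtain ⟨⟨y, hy, hy'⟩, w, hw, hw'⟩ := hx p q hp hq
  rcases h1 with h1 | h1
  · exact hw (h1 hw')
  · exact h1 y hy' hy

theorem definable_Fr (hmin : IsOMinimal L M) {S : Set M} (hS : B.Definable₁ L S) :
    B.Definable₁ L (Fr S) := by
  have : DP L B (fun x : Fin 1 → M => ∀ u v, u < x 0 → x 0 < v →
      (∃ y, y ∈ S ∧ u < y ∧ y < v) ∧ ∃ y, y ∉ S ∧ u < y ∧ y < v) := by
    have hl := hmin.1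
    refine DP.all (DP.all (DP.imp (DP.lt hl (DT.var _) (DT.var _))
      (DP.imp (DP.lt hl (DT.var _) (DT.var _)) (DP.and (DP.ex ?_) (DP.ex ?_)))))
    · exact DP.and (DP.mem hS (DT.var _))
        (DP.and (DP.lt hl (DT.var _) (DT.var _)) (DP.lt hl (DT.var _) (DT.var _)))
    · exact DP.and (DP.not (DP.mem hS (DT.var _)))
        (DP.and (DP.lt hl (DT.var _) (DT.var _)) (DP.lt hl (DT.var _) (DT.var _)))
  exact this

/-- The points of a finite definable subset of a linear order are definable, being its first,
second, ... element. -/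
theorem finite_subset_dcl (hmin : IsOMinimal L M) (n : ℕ) {S : Set M} (hS : B.Definable₁ L S)
    (hfin : S.Finite) (hn : S.ncard = n) : S ⊆ dcl L B := by
  induction n generalizing S with
  | zero =>
    rw [(Set.ncard_eq_zero hfin).1 hn]
    exact Set.empty_subset _
  | succ n ih =>
    have hne : S.Nonempty := by
      rw [← Set.ncard_pos hfin]; omega
    obtain ⟨m, hm, hmin'⟩ := Set.exists_min_image S id hfin hne
    have hmd : m ∈ dcl L B := by
      have : DP L B (fun v : Fin 1 → M => v 0 ∈ S ∧ ∀ y, y ∈ S → v 0 ≤ y) :=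
        DP.and (DP.mem hS (DT.var _)) (DP.all (DP.imp (DP.mem hS (DT.var _))
          (DP.le hmin.1 (DT.var _) (DT.var _))))
      refine DP.congr this fun v => ⟨fun h => ?_, fun h => ?_⟩
      · exact le_antisymm (h.2 m hm) (hmin' _ h.1)
      · have h : v 0 = m := h
        rw [h]
        exact ⟨hm, hmin'⟩
    have hS' : B.Definable₁ L (S \ {m}) := by
      have : DP L B (fun v : Fin 1 → M => v 0 ∈ S ∧ ¬ v 0 = m) :=
        DP.and (DP.mem hS (DT.var _)) (DP.not (DP.eq (DT.var _) (DT.const hmd)))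
      exact this
    have := ih hS' (hfin.subset Set.sdiff_subset) (by
      rw [Set.ncard_sdiff_singleton_of_mem hm]; omega)
    intro x hx
    by_cases h : x = m
    · exact h ▸ hmd
    · exact this ⟨hx, h⟩

theorem Fr_subset_dcl (hmin : IsOMinimal L M) {S : Set M} (hS : B.Definable₁ L S) :
    Fr S ⊆ dcl L B :=
  finite_subset_dcl hmin _ (definable_Fr hmin hS)
    (hmin.finite_Fr (Definable₁.to_univ hS)) rfl

theorem lub_mem_dcl (hmin : IsOMinimal L M) {S : Set M} (hS : B.Definable₁ L S) {a : M}
    (ha : IsLUB S a) : a ∈ dcl L B := by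
  have hl := hmin.1
  have : DP L B (fun v : Fin 1 → M => (∀ s, s ∈ S → s ≤ v 0) ∧
      ∀ u, (∀ s, s ∈ S → s ≤ u) → v 0 ≤ u) :=
    DP.and (DP.all (DP.imp (DP.mem hS (DT.var _)) (DP.le hl (DT.var _) (DT.var _))))
      (DP.all (DP.imp (DP.all (DP.imp (DP.mem hS (DT.var _)) (DP.le hl (DT.var _) (DT.var _))))
        (DP.le hl (DT.var _) (DT.var _))))
  refine DP.congr this fun v => ⟨fun h => ?_, fun h => ?_⟩
  · exact IsLUB.unique (s := S) ⟨fun s hs => h.1 s hs, fun u hu => h.2 u fun s hs => hu hs⟩ ha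
  · have h : v 0 = a := h
    rw [h]
    exact ⟨fun s hs => ha.1 hs, fun u hu => ha.2 fun s hs => hu s hs⟩

/-- A definable set containing `c` contains `[c, w)`, where `w` is `+∞` or a frontier point of the
set (possibly `c` itself). -/
theorem exists_right (hmin : IsOMinimal L M) {S : Set M} (hS : B.Definable₁ L S) {c : M}
    (hc : c ∈ S) : (∀ y, c ≤ y → y ∈ S) ∨ ∃ w ∈ Fr S, c ≤ w ∧ ∀ y, c ≤ y → y < w → y ∈ S := by
  have hl := hmin.1
  by_cases hW : ∃ y, c ≤ y ∧ y ∉ S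
  · right
    have hdef : (Set.univ : Set M).Definable₁ L {y | c ≤ y ∧ y ∉ S} := by
      have : DP L Set.univ (fun v : Fin 1 → M => c ≤ v 0 ∧ ¬ v 0 ∈ S) :=
        DP.and (DP.le hl (DT.const (mem_dcl_univ c)) (DT.var _))
          (DP.not (DP.mem (Definable₁.to_univ hS) (DT.var _)))
      exact this
    obtain ⟨w, hw⟩ := hmin.exists_isGLB hdef hW ⟨c, fun y hy => hy.1⟩
    have hcw : c ≤ w := hw.2 fun y hy => hy.1
    have hsub : ∀ y, c ≤ y → y < w → y ∈ S := fun y h1 h2 => by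
      by_contra h
      exact absurd (hw.1 (show y ∈ {y | c ≤ y ∧ y ∉ S} from ⟨h1, h⟩)) (not_le.2 h2)
    refine ⟨w, fun u v hu hv => ⟨?_, ?_⟩, hcw, hsub⟩
    · rcases hcw.eq_or_lt with rfl | hlt
      · exact ⟨c, hc, hu, hv⟩
      · obtain ⟨_, hd, _, _, _⟩ := id hmin
        obtain ⟨y, hy1, hy2⟩ := exists_between (sup_lt_iff.2 ⟨hu, hlt⟩ : u ⊔ c < w)
        obtain ⟨hy3, hy4⟩ := sup_lt_iff.1 hy1
        exact ⟨y, hsub y hy4.le hy2, hy3, hy2.trans hv⟩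
    · by_contra hcon
      have : v ≤ w := hw.2 fun y hy => by
        by_contra hlt
        exact hcon ⟨y, hy.2, hu.trans_le (hw.1 hy), not_le.1 hlt⟩
      exact absurd this (not_le.2 hv)
  · left
    intro y hy
    by_contra h
    exact hW ⟨y, hy, h⟩

theorem exists_left (hmin : IsOMinimal L M) {S : Set M} (hS : B.Definable₁ L S) {c : M}
    (hc : c ∈ S) : (∀ y, y ≤ c → y ∈ S) ∨ ∃ w ∈ Fr S, w ≤ c ∧ ∀ y, y ≤ c → w < y → y ∈ S := by
  have hl := hmin.1
  by_cases hW : ∃ y, y ≤ c ∧ y ∉ S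
  · right
    have hdef : (Set.univ : Set M).Definable₁ L {y | y ≤ c ∧ y ∉ S} := by
      have : DP L Set.univ (fun v : Fin 1 → M => v 0 ≤ c ∧ ¬ v 0 ∈ S) :=
        DP.and (DP.le hl (DT.var _) (DT.const (mem_dcl_univ c)))
          (DP.not (DP.mem (Definable₁.to_univ hS) (DT.var _)))
      exact this
    obtain ⟨w, hw⟩ := hmin.exists_isLUB hdef hW ⟨c, fun y hy => hy.1⟩
    have hcw : w ≤ c := hw.2 fun y hy => hy.1
    have hsub : ∀ y, y ≤ c → w < y → y ∈ S := fun y h1 h2 => by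
      by_contra h
      exact absurd (hw.1 (show y ∈ {y | y ≤ c ∧ y ∉ S} from ⟨h1, h⟩)) (not_le.2 h2)
    refine ⟨w, fun u v hu hv => ⟨?_, ?_⟩, hcw, hsub⟩
    · rcases hcw.eq_or_lt with rfl | hlt
      · exact ⟨w, hc, hu, hv⟩
      · obtain ⟨_, hd, _, _, _⟩ := id hmin
        obtain ⟨y, hy1, hy2⟩ := exists_between (lt_inf_iff.2 ⟨hv, hlt⟩ : w < v ⊓ c)
        obtain ⟨hy3, hy4⟩ := lt_inf_iff.1 hy2
        exact ⟨y, hsub y hy4.le hy1, hu.trans hy1, hy3⟩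
    · by_contra hcon
      have : w ≤ u := hw.2 fun y hy => by
        by_contra hlt
        exact hcon ⟨y, hy.2, not_le.1 hlt, (hw.1 hy).trans_lt hv⟩
      exact absurd this (not_le.2 hu)
  · left
    intro y hy
    by_contra h
    exact hW ⟨y, hy, h⟩

/-- If `tp(c/B)` is neither algebraic nor principal, then every `B`-definable set containing `c`
contains a closed interval around `c` with endpoints in `dcl B`. -/
theorem exists_Icc (hmin : IsOMinimal L M) {c : M} (hc : c ∉ dcl L B) (hnp : ¬ Principal L B c)
    {S : Set M} (hS : B.Definable₁ L S) (hcS : c ∈ S) :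
    ∃ b ∈ dcl L B, ∃ g ∈ dcl L B, b < c ∧ c < g ∧ Set.Icc b g ⊆ S := by
  have hFr := Fr_subset_dcl hmin hS
  have hA : ∀ b ∈ dcl L B, b < c → ∃ d ∈ dcl L B, b < d ∧ d < c := by
    intro b hb hbc
    by_contra h
    exact hnp ⟨hc, Or.inl ⟨b, hb, hbc, fun d hd hd' => h ⟨d, hd, hd'⟩⟩⟩
  have hBe : ∀ b ∈ dcl L B, c < b → ∃ d ∈ dcl L B, c < d ∧ d < b := by
    intro b hb hbc
    by_contra h
    exact hnp ⟨hc, Or.inr (Or.inl ⟨b, hb, hbc, fun d hd hd' => h ⟨d, hd, hd'⟩⟩)⟩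
  have hne : ∀ d ∈ dcl L B, d ≠ c := fun d hd h => hc (h ▸ hd)
  have hP : ∃ d ∈ dcl L B, c < d := by
    by_contra h
    refine hnp ⟨hc, Or.inr (Or.inr (Or.inl fun d hd => ?_))⟩
    exact lt_of_le_of_ne (not_lt.1 fun h' => h ⟨d, hd, h'⟩) (hne d hd)
  have hN : ∃ d ∈ dcl L B, d < c := by
    by_contra h
    refine hnp ⟨hc, Or.inr (Or.inr (Or.inr fun d hd => ?_))⟩
    exact lt_of_le_of_ne (not_lt.1 fun h' => h ⟨d, hd, h'⟩) (hne d hd).symm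
  have hR : ∃ g ∈ dcl L B, c < g ∧ ∀ y, c ≤ y → y ≤ g → y ∈ S := by
    rcases exists_right hmin hS hcS with h | ⟨w, hw, hcw, h⟩
    · obtain ⟨d, hd, hd'⟩ := hP
      exact ⟨d, hd, hd', fun y hy _ => h y hy⟩
    · obtain ⟨d, hd, hd', hd''⟩ := hBe w (hFr hw) (lt_of_le_of_ne hcw (hne w (hFr hw)).symm)
      exact ⟨d, hd, hd', fun y hy hy' => h y hy (hy'.trans_lt hd'')⟩
  have hL : ∃ b ∈ dcl L B, b < c ∧ ∀ y, y ≤ c → b ≤ y → y ∈ S := by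
    rcases exists_left hmin hS hcS with h | ⟨w, hw, hcw, h⟩
    · obtain ⟨d, hd, hd'⟩ := hN
      exact ⟨d, hd, hd', fun y hy _ => h y hy⟩
    · obtain ⟨d, hd, hd', hd''⟩ := hA w (hFr hw) (lt_of_le_of_ne hcw (hne w (hFr hw)))
      exact ⟨d, hd, hd'', fun y hy hy' => h y hy (hd'.trans_le hy')⟩
  obtain ⟨g, hg, hcg, h1⟩ := hR
  obtain ⟨b, hb, hbc, h2⟩ := hL
  refine ⟨b, hb, g, hg, hbc, hcg, fun y hy => ?_⟩
  rcases le_total c y with h | h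
  · exact h1 y h hy.2
  · exact h2 y h hy.1

end OMinimal

/-! ### Definable functions at a non-principal point -/

section Main

variable {L : FirstOrder.Language} {M : Type*} [L.Structure M] [LinearOrder M] {B : Set M}

/-- A definable function `f` which is greater than `z` on `[b, g]`, `b < g`, cannot come
arbitrarily close to `z` on every open subinterval: its image would be infinite, hence contain an
interval `(p, q)`; for `s` in it the set where `f ≥ s` would be infinite, hence contain an interval,
on which `f` is bounded away from `z`. -/
theorem not_close_everywhere (hmin : IsOMinimal L M) {f : M → M} (hf : DefFun₁ L B f) {z b g : M}
    (hbg : b < g) (hpos : ∀ x ∈ Set.Icc b g, z < f x)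
    (hacc : ∀ x ∈ Set.Icc b g, ∀ s u v, z < s → u < x → x < v → ∃ y, u < y ∧ y < v ∧ f y < s) :
    False := by
  have hl := hmin.1
  obtain ⟨_, _, _, _, _⟩ := id hmin
  have hf' : DefFun₁ L Set.univ f := hf.mono (Set.subset_univ _)
  have hin : ∀ p q, p < q → Set.Ioo p q ⊆ Set.Icc b g → ∀ s, z < s →
      ∃ y ∈ Set.Ioo p q, f y < s := by
    intro p q hpq hsub s hs
    obtain ⟨x, hx⟩ := exists_between hpq
    obtain ⟨y, h1, h2, h3⟩ := hacc x (hsub hx) s p q hs hx.1 hx.2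
    exact ⟨y, ⟨h1, h2⟩, h3⟩
  have himg : (Set.univ : Set M).Definable₁ L (f '' Set.Icc b g) := by
    have : DP L Set.univ (fun v : Fin 1 → M => ∃ x, (b ≤ x ∧ x ≤ g) ∧ f x = v 0) :=
      DP.ex (DP.and (DP.and (DP.le hl (DT.const (mem_dcl_univ b)) (DT.var _))
        (DP.le hl (DT.var _) (DT.const (mem_dcl_univ g))))
        (DP.eq (DT.app hf' (DT.var _)) (DT.var _)))
    exact this
  by_cases hfin : (f '' Set.Icc b g).Finite
  · obtain ⟨m, hm, hle⟩ := Set.exists_min_image _ id hfin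
      (Set.Nonempty.image f ⟨b, Set.left_mem_Icc.2 hbg.le⟩)
    obtain ⟨x, hx, rfl⟩ := hm
    obtain ⟨y, hy, hlt⟩ := hin b g hbg Set.Ioo_subset_Icc_self (f x) (hpos x hx)
    exact absurd (hle _ (Set.mem_image_of_mem f (Set.Ioo_subset_Icc_self hy))) (not_le.2 hlt)
  · obtain ⟨p, q, hpq, hsub⟩ := hmin.exists_Ioo himg hfin
    obtain ⟨s, hps, hsq⟩ := exists_between hpq
    have hzs : z < s := by
      obtain ⟨x, hx, rfl⟩ := hsub ⟨hps, hsq⟩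
      exact hpos x hx
    have hF : (Set.univ : Set M).Definable₁ L {x | (b ≤ x ∧ x ≤ g) ∧ s ≤ f x} := by
      have : DP L Set.univ (fun v : Fin 1 → M => (b ≤ v 0 ∧ v 0 ≤ g) ∧ s ≤ f (v 0)) :=
        DP.and (DP.and (DP.le hl (DT.const (mem_dcl_univ b)) (DT.var _))
          (DP.le hl (DT.var _) (DT.const (mem_dcl_univ g))))
          (DP.le hl (DT.const (mem_dcl_univ s)) (DT.app hf' (DT.var _)))
      exact this
    have hinf : {x | (b ≤ x ∧ x ≤ g) ∧ s ≤ f x}.Infinite := by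
      refine Set.Infinite.of_image f ((Set.Ioo_infinite hsq).mono fun y hy => ?_)
      obtain ⟨x, hx, rfl⟩ := hsub ⟨hps.trans hy.1, hy.2⟩
      exact ⟨x, ⟨hx, hy.1.le⟩, rfl⟩
    obtain ⟨p', q', hpq', hsub'⟩ := hmin.exists_Ioo hF hinf
    obtain ⟨y, hy, hlt⟩ := hin p' q' hpq' (fun x hx => (hsub' hx).1) s hzs
    exact absurd (hsub' hy).2 (not_le.2 hlt)

/-- Definable compactness: a definable function on `[b, g]` that is locally bounded away from `z`
is uniformly bounded away from `z`. -/
theorem exists_uniform (hmin : IsOMinimal L M) {f : M → M} (hf : DefFun₁ L B f) {z b g : M}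
    (hbg : b ≤ g) (hpos : ∀ x ∈ Set.Icc b g, z < f x)
    (hloc : ∀ x ∈ Set.Icc b g, ∃ s u v, z < s ∧ u < x ∧ x < v ∧ ∀ y, u < y → y < v → s ≤ f y) :
    ∃ s, z < s ∧ ∀ x ∈ Set.Icc b g, s ≤ f x := by
  have hl := hmin.1
  obtain ⟨_, _, _, _, _⟩ := id hmin
  have hf' : DefFun₁ L Set.univ f := hf.mono (Set.subset_univ _)
  let P : Set M := {y | (b ≤ y ∧ y ≤ g) ∧ ∃ s, z < s ∧ ∀ x, b ≤ x → x ≤ y → s ≤ f x}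
  have hP : (Set.univ : Set M).Definable₁ L P := by
    have : DP L Set.univ (fun v : Fin 1 → M => (b ≤ v 0 ∧ v 0 ≤ g) ∧
        ∃ s, z < s ∧ ∀ x, b ≤ x → x ≤ v 0 → s ≤ f x) :=
      DP.and (DP.and (DP.le hl (DT.const (mem_dcl_univ b)) (DT.var _))
        (DP.le hl (DT.var _) (DT.const (mem_dcl_univ g))))
        (DP.ex (DP.and (DP.lt hl (DT.const (mem_dcl_univ z)) (DT.var _))
          (DP.all (DP.imp (DP.le hl (DT.const (mem_dcl_univ b)) (DT.var _))
            (DP.imp (DP.le hl (DT.var _) (DT.var _))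
              (DP.le hl (DT.var _) (DT.app hf' (DT.var _))))))))
    exact this
  have hbP : b ∈ P := ⟨⟨le_rfl, hbg⟩, f b, hpos b ⟨le_rfl, hbg⟩, fun x h1 h2 => by
    rw [le_antisymm h2 h1]⟩
  obtain ⟨l, hlub⟩ := hmin.exists_isLUB hP ⟨b, hbP⟩ ⟨g, fun y hy => hy.1.2⟩
  have hbl : b ≤ l := hlub.1 hbP
  have hlg : l ≤ g := hlub.2 fun y hy => hy.1.2
  obtain ⟨s, u, v, hs, hu, hv, hloc'⟩ := hloc l ⟨hbl, hlg⟩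
  obtain ⟨y, hyP, huy⟩ : ∃ y ∈ P, u < y := by
    by_contra hcon
    have : l ≤ u := hlub.2 fun y hy => not_lt.1 fun h => hcon ⟨y, hy, h⟩
    exact absurd this (not_le.2 hu)
  obtain ⟨-, s', hs', hy'⟩ := hyP
  have hext : ∀ w, b ≤ w → w ≤ g → w < v → w ∈ P := by
    intro w hbw hwg hwv
    refine ⟨⟨hbw, hwg⟩, s ⊓ s', lt_inf_iff.2 ⟨hs, hs'⟩, fun x hx hxw => ?_⟩
    rcases le_or_gt x y with h | h
    · exact inf_le_right.trans (hy' x hx h)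
    · exact inf_le_left.trans (hloc' x (huy.trans h) (hxw.trans_lt hwv))
  have hgP : g ∈ P := by
    rcases hlg.eq_or_lt with rfl | hlt
    · exact hext l hbl le_rfl hv
    · obtain ⟨w, h1, h2⟩ := exists_between (lt_inf_iff.2 ⟨hv, hlt⟩ : l < v ⊓ g)
      obtain ⟨h3, h4⟩ := lt_inf_iff.1 h2
      exact absurd (hlub.1 (hext w (hbl.trans h1.le) h4.le h3)) (not_le.2 h1)
  obtain ⟨-, s₀, h1, h2⟩ := hgP
  exact ⟨s₀, h1, fun x hx => h2 x hx.1 hx.2⟩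

/-- At a point whose type over `B` is neither algebraic nor principal, no `B`-definable function
takes a value infinitesimally above `z` relative to `dcl B`. -/
theorem not_principalAbove_app (hmin : IsOMinimal L M) {z : M} (hz : z ∈ dcl L B)
    (hdense : ∀ t ∈ dcl L B, z < t → ∃ t' ∈ dcl L B, z < t' ∧ t' < t)
    {c : M} (hc : c ∉ dcl L B) (hnp : ¬ Principal L B c) {f : M → M} (hf : DefFun₁ L B f) :
    ¬ PrincipalAbove L B (f c) z := by
  rintro ⟨-, hzc, hempty⟩
  have hl := hmin.1
  -- the points near which `f` comes arbitrarily close to `z`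
  let Acc : Set M := {x | ∀ s u v, z < s → u < x → x < v → ∃ y, u < y ∧ y < v ∧ f y < s}
  have hAcc : DP L B (fun x : Fin 1 → M => x 0 ∈ Acc) := by
    have : DP L B (fun x : Fin 1 → M => ∀ s u v, z < s → u < x 0 → x 0 < v →
        ∃ y, u < y ∧ y < v ∧ f y < s) :=
      DP.all (DP.all (DP.all (DP.imp (DP.lt hl (DT.const hz) (DT.var _))
        (DP.imp (DP.lt hl (DT.var _) (DT.var _)) (DP.imp (DP.lt hl (DT.var _) (DT.var _))
          (DP.ex (DP.and (DP.lt hl (DT.var _) (DT.var _)) (DP.and (DP.lt hl (DT.var _) (DT.var _))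
            (DP.lt hl (DT.app hf (DT.var _)) (DT.var _))))))))))
    exact this
  have hpos : DP L B (fun x : Fin 1 → M => z < f (x 0)) :=
    DP.lt hl (DT.const hz) (DT.app hf (DT.var _))
  by_cases hcA : c ∈ Acc
  · have hS : B.Definable₁ L {x | z < f x ∧ x ∈ Acc} := DP.and hpos hAcc
    obtain ⟨b, hb, g, hg, hbc, hcg, hsub⟩ := exists_Icc hmin hc hnp hS ⟨hzc, hcA⟩
    exact not_close_everywhere hmin hf (hbc.trans hcg) (fun x hx => (hsub hx).1)
      fun x hx => (hsub hx).2
  · have hS : B.Definable₁ L {x | z < f x ∧ x ∉ Acc} := DP.and hpos (DP.not hAcc)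
    obtain ⟨b, hb, g, hg, hbc, hcg, hsub⟩ := exists_Icc hmin hc hnp hS ⟨hzc, hcA⟩
    obtain ⟨s, hzs, hs⟩ := exists_uniform hmin hf (hbc.trans hcg).le
      (fun x hx => (hsub hx).1) fun x hx => by
        have h := (hsub hx).2
        simp only [Acc, Set.mem_ofPred_eq] at h
        push Not at h
        obtain ⟨s, u, v, h1, h2, h3, h4⟩ := h
        exact ⟨s, u, v, h1, h2, h3, h4⟩
    -- the largest lower bound of `f` on `[b, g]` is a point of `dcl B` in `(z, f c]`
    let Low : Set M := {s | z < s ∧ ∀ x, b ≤ x → x ≤ g → s ≤ f x}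
    have hLow : B.Definable₁ L Low := by
      have : DP L B (fun v : Fin 1 → M => z < v 0 ∧ ∀ x, b ≤ x → x ≤ g → v 0 ≤ f x) :=
        DP.and (DP.lt hl (DT.const hz) (DT.var _))
          (DP.all (DP.imp (DP.le hl (DT.const hb) (DT.var _))
            (DP.imp (DP.le hl (DT.var _) (DT.const hg))
              (DP.le hl (DT.var _) (DT.app hf (DT.var _))))))
      exact this
    have hsLow : s ∈ Low := ⟨hzs, fun x h1 h2 => hs x ⟨h1, h2⟩⟩
    have hub : f c ∈ upperBounds Low := fun t ht => ht.2 c hbc.le hcg.le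
    obtain ⟨σ, hσ⟩ := hmin.exists_isLUB (Definable₁.to_univ hLow) ⟨s, hsLow⟩ ⟨f c, hub⟩
    obtain ⟨t, ht, hzt, htσ⟩ := hdense σ (lub_mem_dcl hmin hLow hσ) (hzs.trans_le (hσ.1 hsLow))
    exact hempty t ht ⟨hzt, htσ.trans_le (hσ.2 hub)⟩

/-! ### Principal types and infinitesimals -/

/-- The principal type above any `b ∈ dcl B` maps to the one near `+∞` and conversely,
`B`-definably. -/
theorem interdef_above (hinter : AllPrincipalInterdef L M) {b : M} (hb : b ∈ dcl L B) :
    Interdef L B {x | PrincipalAbove L B x b} {x | NearPosInf L B x} := by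
  have h := (hinter B).1 b
  simp only [PrincipalAbove, NearPosInf, dcl_union hb] at h
  obtain ⟨⟨f, hf, hf'⟩, g, hg, hg'⟩ := h
  exact ⟨⟨f, hf.of_union hb, hf'⟩, g, hg.of_union hb, hg'⟩

theorem interdef_above_below (hinter : AllPrincipalInterdef L M) {b c : M} (hb : b ∈ dcl L B)
    (hc : c ∈ dcl L B) :
    Interdef L B {x | PrincipalAbove L B x b} {x | PrincipalBelow L B x c} := by
  have h := (hinter B).2.1 b c
  have e : B ∪ {b, c} = (B ∪ {b}) ∪ {c} := by
    rw [Set.union_assoc]; rfl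
  have hc' : c ∈ dcl L (B ∪ {b}) := dcl_mono Set.subset_union_left hc
  rw [e] at h
  simp only [PrincipalAbove, PrincipalBelow, dcl_union hc', dcl_union hb] at h
  obtain ⟨⟨f, hf, hf'⟩, g, hg, hg'⟩ := h
  exact ⟨⟨f, (hf.of_union hc').of_union hb, hf'⟩, g, (hg.of_union hc').of_union hb, hg'⟩

/-- No point of `dcl B` is the immediate successor of `z` in `dcl B`: it would satisfy
`PrincipalAbove`, and its image near `+∞` would be a point of `dcl B` above all of `dcl B`. -/
theorem dense_above (hinter : AllPrincipalInterdef L M) {z : M} (hz : z ∈ dcl L B) :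
    ∀ t ∈ dcl L B, z < t → ∃ t' ∈ dcl L B, z < t' ∧ t' < t := by
  intro t ht hzt
  by_contra h
  obtain ⟨⟨f, hf, hf'⟩, -⟩ := interdef_above hinter hz
  have hinf : NearPosInf L B (f t) := hf' t ⟨hz, hzt, fun d hd hd' => h ⟨d, hd, hd'⟩⟩
  exact lt_irrefl _ (hinf (f t) (hf.mem_dcl ht))

/-- A realization of a principal type defines an infinitesimal above `z`. -/
theorem exists_infinitesimal (hinter : AllPrincipalInterdef L M) {z : M} (hz : z ∈ dcl L B)
    {c : M} (hc : Principal L B c) : ∃ e ∈ dcl L (B ∪ {c}), PrincipalAbove L B e z := by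
  have hcm : c ∈ dcl L (B ∪ {c}) := subset_dcl (Or.inr rfl)
  have hsub : B ⊆ B ∪ {c} := Set.subset_union_left
  have hpos : ∀ x ∈ dcl L (B ∪ {c}), NearPosInf L B x →
      ∃ e ∈ dcl L (B ∪ {c}), PrincipalAbove L B e z := by
    intro x hx hx'
    obtain ⟨-, g, hg, hg'⟩ := interdef_above hinter hz
    exact ⟨g x, (hg.mono hsub).mem_dcl hx, hg' x hx'⟩
  rcases hc.2 with ⟨b, hb⟩ | ⟨b, hb⟩ | h | h
  · obtain ⟨⟨f, hf, hf'⟩, -⟩ := interdef_above hinter hb.1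
    exact hpos (f c) ((hf.mono hsub).mem_dcl hcm) (hf' c hb)
  · obtain ⟨-, g, hg, hg'⟩ := interdef_above_below hinter hz hb.1
    exact ⟨g c, (hg.mono hsub).mem_dcl hcm, hg' c hb⟩
  · exact hpos c hcm h
  · obtain ⟨-, g, hg, hg'⟩ := (hinter B).2.2
    exact hpos (g c) ((hg.mono hsub).mem_dcl hcm) (hg' c h)

/-- An element that defines an infinitesimal above `z` realizes a principal type. -/
theorem principal_of_infinitesimal (hmin : IsOMinimal L M) (hinter : AllPrincipalInterdef L M)
    {z : M} (hz : z ∈ dcl L B) {c d : M} (hd : d ∈ dcl L (B ∪ {c}))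
    (hdz : PrincipalAbove L B d z) : Principal L B c := by
  have hdense := dense_above hinter hz
  obtain ⟨f, hf, rfl⟩ := exists_defFun hz hd
  have hc : c ∉ dcl L B := fun hc => by
    obtain ⟨t, ht, ht'⟩ := hdense _ (hf.mem_dcl hc) hdz.2.1
    exact hdz.2.2 t ht ht'
  by_contra hnp
  exact not_principalAbove_app hmin hz hdense hc hnp hf hdz

end Main

end OMinPaper

/-- If `p` is a decreasing `n`-type over `A`, `c̄ ⊨ p`, and
`tp(c_k/Ac̄_{<k})` is principal, then `tp(c_i/Ac̄_{<k})` is principal for all `k ≤ i ≤ n`. -/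
theorem statement_14 (L : FirstOrder.Language) (C : Type*) [L.Structure C] [LinearOrder C]
    (hmin : IsOMinimal L C)
    (hinter : AllPrincipalInterdef L C)
    (z : C) (hz : z ∈ dcl L (∅ : Set C))
    (A : Set C) (n : ℕ) (c : Fin n → C)
    (hdec : Decreasing L z A c)
    (k : Fin n) (hk : Principal L (A ∪ below c k) (c k)) :
    ∀ i : Fin n, k ≤ i → Principal L (A ∪ below c k) (c i) := by
  intro i hki
  rcases hki.eq_or_lt with rfl | hlt
  · exact hk
  have hz' : z ∈ dcl L (A ∪ below c k) := dcl_mono (Set.empty_subset _) hz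
  rcases hdec k i hlt with ⟨a, ha, hza, hempty⟩ | ⟨-, hnot⟩
  · exact principal_of_infinitesimal hmin hinter hz' ha
      ⟨hz', hza, fun d hd => hempty d (dcl_mono Set.subset_union_left hd)⟩
  · obtain ⟨e, he, hez⟩ := exists_infinitesimal hinter hz' hk
    -- `c k ⊀ c i` gives a point of `dcl (A c_{<k} c_i)` between `z` and the infinitesimal `e`
    obtain ⟨d, hd, hd'⟩ : ∃ d ∈ dcl L (A ∪ below c k ∪ {c i}), d ∈ Set.Ioo z e := by
      by_contra h
      exact hnot ⟨e, he, hez.2.1, fun d hd hd' => h ⟨d, hd, hd'⟩⟩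
    exact principal_of_infinitesimal hmin hinter hz' hd
      ⟨hz', hd'.1, fun t ht ht' => hez.2.2 t ht ⟨ht'.1, ht'.2.trans hd'.2⟩⟩
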